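/- arXiv:math-ph/0109009 — 12 statements merged into one kernel-verified Lean document; each statement's English description precedes it below -/
import Mathlib

section
/- Let A be a unital Banach algebra with a continuous algebra automorphism T : A → A. Fix integers M, N ≥ 0 and functions U_m : ℝ → A for −M ≤ m ≤ N. Let φ : ℝ → A be differentiable with φ(t) a unit for every t, satisfying φ'(t) = Σ_{m=−M}^{N} U_m(t)·T^m(φ(t)) for all t. Set σ(t) := φ(t)·(T(φ(t)))⁻¹, and define B_m(t) ∈ A for all m ∈ ℤ by B_0(t) = 1 and B_{m+1}(t) = (T^m(σ(t)))⁻¹·B_m(t) for every m ∈ ℤ (for m < 0 this reads B_m(t) = T^m(σ(t))·B_{m+1}(t)). Then σ is differentiable and for all t: σ'(t) = Σ_{m=−M}^{N} [ U_m(t)·B_m(t)·σ(t) − σ(t)·T(U_m(t))·B_{m+1}(t)·σ(t) ]. -/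
/-- In a unital Banach algebra `A` with continuous automorphism `T`,
if a unit-valued differentiable `φ` solves `φ' = Σ_{m=-M}^{N} U_m · T^m φ`, then the
dressing factor `σ = φ·(Tφ)⁻¹` is differentiable with
`σ' = Σ_{m=-M}^{N} [U_m · B_m · σ − σ · T(U_m) · B_{m+1} · σ]`, where the lattice Bell
polynomials `B_m`, `m ∈ ℤ`, satisfy `B_0 = 1` and `B_{m+1} = (T^m σ)⁻¹ · B_m`. -/
theorem dressing_factor_evolution_first_kind
    {A : Type*} [NormedRing A] [NormedAlgebra ℝ A] [CompleteSpace A]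
    (T : A ≃+* A) (hT : Continuous T) (M N : ℕ) (U : ℤ → ℝ → A)
    (φ : ℝ → A) (hφu : ∀ t, IsUnit (φ t))
    (hφ : ∀ t, HasDerivAt φ
      (∑ m ∈ Finset.Icc (-(M : ℤ)) (N : ℤ), U m t * (T ^ m) (φ t)) t)
    (σ : ℝ → A) (hσ : ∀ t, σ t = φ t * Ring.inverse (T (φ t)))
    (B : ℤ → ℝ → A) (hB0 : ∀ t, B 0 t = 1)
    (hBrec : ∀ (m : ℤ) (t : ℝ), B (m + 1) t = Ring.inverse ((T ^ m) (σ t)) * B m t) :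
    ∀ t, HasDerivAt σ
      (∑ m ∈ Finset.Icc (-(M : ℤ)) (N : ℤ),
        (U m t * B m t * σ t - σ t * T (U m t) * B (m + 1) t * σ t)) t := by
  intro t
  obtain ⟨u, hu⟩ := hφu t
  let v : Aˣ := Units.map (T : A →* A) u
  have hv : (v : A) = T (φ t) := by simp [v, ← hu]
  have hinv : Ring.inverse (T (φ t)) = ((v⁻¹ : Aˣ) : A) := by
    rw [← hv, Ring.inverse_unit]
  have hσt : σ t = u * ((v⁻¹ : Aˣ) : A) := by rw [hσ, hinv, hu]
  -- the key identity `B m * φ = T ^ m φ`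
  have hstep : ∀ m : ℤ, Ring.inverse ((T ^ m) (σ t)) * (T ^ m) (φ t) = (T ^ (m + 1)) (φ t) ∧
      ∀ x y, x = Ring.inverse ((T ^ m) (σ t)) * y → y = (T ^ m) (σ t) * x := by
    intro m
    let w : Aˣ := Units.map ((T ^ m : A ≃+* A) : A →* A) (u * v⁻¹)
    have hw : (T ^ m) (σ t) = (w : A) := by
      rw [hσt, ← Units.val_mul]; rfl
    have h1 : (T ^ (m + 1)) (φ t) = (T ^ m) (v : A) := by
      rw [zpow_add_one, hv]; rfl
    have h2 : (T ^ m) (φ t) = (w : A) * (T ^ m) (v : A) := by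
      rw [← hw, ← map_mul, hσt, mul_assoc, Units.inv_mul, mul_one, hu]
    rw [hw, Ring.inverse_unit]
    refine ⟨?_, ?_⟩
    · rw [h1, h2, Units.inv_mul_cancel_left]
    · rintro x y rfl
      rw [Units.mul_inv_cancel_left]
  have hB : ∀ m : ℤ, B m t * φ t = (T ^ m) (φ t) := by
    intro m
    induction m using Int.induction_on with
    | zero => simp [hB0]
    | succ i ih => rw [hBrec, mul_assoc, ih, (hstep _).1]
    | pred i ih =>
      have h := (hstep (-(i : ℤ) - 1)).2 _ _ (hBrec (-(i : ℤ) - 1) t)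
      have h1 := (hstep (-(i : ℤ) - 1)).2 _ _ (hstep (-(i : ℤ) - 1)).1.symm
      rw [sub_add_cancel] at h h1
      rw [h, mul_assoc, ih, ← h1]
  -- derivatives
  let L : A →L[ℝ] A := (T : A →+ A).toRealLinearMap hT
  have hL : ∀ a, L a = T a := fun a => rfl
  have hTφ := (L.hasFDerivAt (x := φ t)).comp_hasDerivAt t (hφ t)
  have hI : HasFDerivAt (𝕜 := ℝ) Ring.inverse
      (-ContinuousLinearMap.mulLeftRight ℝ A ((v⁻¹ : Aˣ) : A) ((v⁻¹ : Aˣ) : A)) (L (φ t)) := by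
    have := hasFDerivAt_ringInverse (𝕜 := ℝ) v
    rw [hv] at this
    exact this
  have hD := (hφ t).mul (hI.comp_hasDerivAt t hTφ)
  have hfun : σ = φ * (Ring.inverse ∘ L ∘ φ) := by
    funext s
    simp [hσ, hL]
  rw [hfun]
  refine hD.congr_deriv ?_
  rw [← hfun]
  simp only [Function.comp, hL, hinv, map_sum, neg_apply,
    ContinuousLinearMap.mulLeftRight_apply, mul_neg, Finset.sum_sub_distrib, Finset.sum_mul,
    Finset.mul_sum, Finset.sum_neg_distrib, ← sub_eq_add_neg]
  refine congrArg₂ (fun x y : A => x - y) ?_ ?_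
  · refine Finset.sum_congr rfl fun m _ => ?_
    rw [hσt, hu, ← hB m]
    simp only [mul_assoc]
  · refine Finset.sum_congr rfl fun m _ => ?_
    have h3 : T ((T ^ m) (φ t)) = (T ^ (m + 1)) (φ t) := by
      rw [add_comm, zpow_one_add]; rfl
    rw [map_mul, h3, ← hB (m + 1), hσt, hu]
    simp only [mul_assoc]
end

section
/- Let A be a unital Banach algebra with a continuous algebra automorphism T : A → A. Fix integers M, N ≥ 0 and families U, U⁺ : ℤ → (ℝ → A) with U_m = U⁺_m = 0 for m outside [−M, N]. Let σ : ℝ → A be differentiable, and assume the recurrence relations hold for every m ∈ ℤ and every t: U⁺_m(t) − U⁺_{m−1}(t)·T^{m−1}(σ(t)) = U_m(t) − σ(t)·T(U_{m−1}(t)) − δ_{m,1}·σ'(t), where δ_{m,1} = 1 if m = 1 and 0 otherwise. Then for every differentiable ψ : ℝ → A satisfying ψ'(t) = Σ_{m=−M}^{N} U_m(t)·T^m(ψ(t)) for all t, the Darboux transform ψ⁺(t) := ψ(t) − σ(t)·T(ψ(t)) satisfies ψ⁺'(t) = Σ_{m∈ℤ} U⁺_m(t)·T^m(ψ⁺(t))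 for all t (the sum being finite). -/
/-- Darboux covariance of the first kind for
`ψ' = Σ_{m=-M}^{N} U_m · T^m ψ` in a unital Banach algebra with continuous
automorphism `T`: if the potentials `U⁺_m` satisfy the recurrence
`U⁺_m − U⁺_{m-1}·T^{m-1}(σ) = U_m − σ·T(U_{m-1}) − δ_{m,1}·σ'`, then the Darboux
transform `ψ⁺ = ψ − σ·Tψ` of any solution `ψ` solves `ψ⁺' = Σ_{m∈ℤ} U⁺_m · T^m ψ⁺`. -/
theorem darboux_covariance_general_equation
    {A : Type*} [NormedRing A] [NormedAlgebra ℝ A] [CompleteSpace A]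
    (T : A ≃+* A) (hT : Continuous T) (M N : ℕ)
    (U Up : ℤ → ℝ → A)
    (hUsupp : ∀ m : ℤ, m ∉ Finset.Icc (-(M : ℤ)) (N : ℤ) → U m = 0)
    (hUpsupp : ∀ m : ℤ, m ∉ Finset.Icc (-(M : ℤ)) (N : ℤ) → Up m = 0)
    (σ σ' : ℝ → A) (hσ : ∀ t, HasDerivAt σ (σ' t) t)
    (hrec : ∀ (m : ℤ) (t : ℝ),
      Up m t - Up (m - 1) t * (T ^ (m - 1)) (σ t)
        = U m t - σ t * T (U (m - 1) t) - (if m = 1 then σ' t else 0))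
    (ψ : ℝ → A)
    (hψ : ∀ t, HasDerivAt ψ
      (∑ m ∈ Finset.Icc (-(M : ℤ)) (N : ℤ), U m t * (T ^ m) (ψ t)) t) :
    ∀ t, HasDerivAt (fun s => ψ s - σ s * T (ψ s))
      (∑ᶠ m : ℤ, Up m t * (T ^ m) (ψ t - σ t * T (ψ t))) t := by
  intro t
  have fin : ∀ f : ℤ → A, (∀ m, m ∉ Finset.Icc (-(M : ℤ)) (N : ℤ) → f m = 0) →
      (Function.support f).Finite := by
    intro f hf
    refine (Finset.finite_toSet (Finset.Icc (-(M : ℤ)) (N : ℤ))).subset ?_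
    intro m hm
    by_contra h
    exact hm (hf m (by simpa using h))
  have shiftfin : ∀ f : ℤ → A, (Function.support f).Finite →
      (Function.support (fun m => f (m - 1))).Finite := by
    intro f hf
    exact hf.preimage (f := fun m : ℤ => m - 1) (fun a _ b _ h => by simpa using h)
  have shift : ∀ f : ℤ → A, ∑ᶠ m, f (m - 1) = ∑ᶠ m, f m := fun f =>
    finsum_comp_equiv (Equiv.subRight (1 : ℤ)) (f := f)
  have hTs : ∀ (m : ℤ) (x : A), (T ^ (m - 1)) (T x) = (T ^ m) x := by
    intro m x
    rw [← RingAut.mul_apply, ← zpow_add_one, sub_add_cancel]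
  have hTs' : ∀ (m : ℤ) (x : A), T ((T ^ (m - 1)) x) = (T ^ m) x := by
    intro m x
    rw [← RingAut.mul_apply, ← zpow_one_add, add_sub_cancel]
  set P : A := ∑ m ∈ Finset.Icc (-(M : ℤ)) (N : ℤ), U m t * (T ^ m) (ψ t) with hP
  let TL : A →L[ℝ] A := (T : A →+* A).toAddMonoidHom.toRealLinearMap hT
  have hTψ : HasDerivAt (fun s => T (ψ s)) (T P) t :=
    TL.hasFDerivAt.comp_hasDerivAt t (hψ t)
  have main := (hψ t).sub ((hσ t).mul hTψ)
  have f1 : (Function.support (fun m => Up m t * (T ^ m) (ψ t))).Finite :=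
    fin _ (fun m hm => by simp [hUpsupp m hm])
  have f2 : (Function.support
      (fun m => Up m t * ((T ^ m) (σ t) * (T ^ m) (T (ψ t))))).Finite :=
    fin _ (fun m hm => by simp [hUpsupp m hm])
  have f3 : (Function.support (fun m => U m t * (T ^ m) (ψ t))).Finite :=
    fin _ (fun m hm => by simp [hUsupp m hm])
  have f4 : (Function.support (fun m => σ t * T (U m t * (T ^ m) (ψ t)))).Finite :=
    fin _ (fun m hm => by simp [hUsupp m hm])
  have f5 : (Function.support
      (fun m : ℤ => (if m = 1 then σ' t else 0) * (T ^ m) (ψ t))).Finite := by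
    refine (Set.finite_singleton (1 : ℤ)).subset ?_
    intro m hm
    by_contra h
    exact hm (by simp [show m ≠ 1 from h])
  have e3 : ∑ᶠ m, U m t * (T ^ m) (ψ t) = P := by
    refine finsum_eq_sum_of_support_subset _ ?_
    intro m hm
    by_contra h
    exact hm (by simp [hUsupp m (by simpa using h)])
  have e4 : ∑ᶠ m, σ t * T (U m t * (T ^ m) (ψ t)) = σ t * T P := by
    rw [hP, map_sum, Finset.mul_sum]
    refine finsum_eq_sum_of_support_subset _ ?_
    intro m hm
    by_contra h
    exact hm (by simp [hUsupp m (by simpa using h)])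
  have e5 : ∑ᶠ m : ℤ, (if m = 1 then σ' t else 0) * (T ^ m) (ψ t) = σ' t * T (ψ t) := by
    rw [finsum_eq_single _ (1 : ℤ) (fun m hm => by simp [hm])]
    simp
  have key : ∑ᶠ m : ℤ, Up m t * (T ^ m) (ψ t - σ t * T (ψ t))
      = P - (σ' t * T (ψ t) + σ t * T P) := by
    calc ∑ᶠ m : ℤ, Up m t * (T ^ m) (ψ t - σ t * T (ψ t))
        = ∑ᶠ m : ℤ, (Up m t * (T ^ m) (ψ t)
            - Up m t * ((T ^ m) (σ t) * (T ^ m) (T (ψ t)))) := by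
          refine finsum_congr fun m => ?_
          rw [map_sub, map_mul, mul_sub]
      _ = ∑ᶠ m : ℤ, (Up m t * (T ^ m) (ψ t)
            - Up (m - 1) t * ((T ^ (m - 1)) (σ t) * (T ^ (m - 1)) (T (ψ t)))) := by
          rw [finsum_sub_distrib f1 f2, finsum_sub_distrib f1 (shiftfin _ f2), shift
            (fun m => Up m t * ((T ^ m) (σ t) * (T ^ m) (T (ψ t))))]
      _ = ∑ᶠ m : ℤ, ((U m t * (T ^ m) (ψ t)
            - σ t * T (U (m - 1) t * (T ^ (m - 1)) (ψ t)))
            - (if m = 1 then σ' t else 0) * (T ^ m) (ψ t)) := by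
          refine finsum_congr fun m => ?_
          rw [hTs, map_mul, hTs', ← mul_assoc, ← mul_assoc, ← sub_mul, ← sub_mul, ← sub_mul,
            hrec]
      _ = P - (σ' t * T (ψ t) + σ t * T P) := by
          rw [finsum_sub_distrib ((f3.union (shiftfin _ f4)).subset
              (Function.support_sub _ _)) f5,
            finsum_sub_distrib f3 (shiftfin _ f4),
            shift (fun m => σ t * T (U m t * (T ^ m) (ψ t))), e3, e4, e5]
          abel
  rw [key]
  exact main
end

section
/- Let A be a unital Banach algebra with a continuous algebra automorphism T : A → A, and let μ ∈ A satisfy T(μ) = μ. Let φ : ℝ → A be differentiable with φ(t) a unit for every t and φ'(t) = μ·φ(t) for all t. Then σ(t) := φ(t)·(T(φ(t)))⁻¹ is differentiable and σ'(t) = μ·σ(t) − σ(t)·μ for all t. -/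
/-- In a unital Banach algebra with continuous automorphism `T`, if
`T(μ) = μ` and a unit-valued differentiable `φ` satisfies `φ' = μ·φ`, then the dressing
factor `σ = φ·(Tφ)⁻¹` is differentiable with `σ' = μ·σ − σ·μ`. -/
theorem stationary_dressing_factor_commutator
    {A : Type*} [NormedRing A] [NormedAlgebra ℝ A] [CompleteSpace A]
    (T : A ≃+* A) (hT : Continuous T) (μ : A) (hμ : T μ = μ)
    (φ : ℝ → A) (hφu : ∀ t, IsUnit (φ t))
    (hφ : ∀ t, HasDerivAt φ (μ * φ t) t)
    (σ : ℝ → A) (hσ : ∀ t, σ t = φ t * Ring.inverse (T (φ t))) :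
    ∀ t, HasDerivAt σ (μ * σ t - σ t * μ) t := by
  intro t
  have hσ' : σ = fun t => φ t * Ring.inverse (T (φ t)) := funext hσ
  have hTφ : HasDerivAt (fun s => T (φ s)) (μ * T (φ t)) t := by
    have h := ((T : A →+ A).toRealLinearMap hT).hasFDerivAt.comp_hasDerivAt t (hφ t)
    have e : ((T : A →+ A).toRealLinearMap hT) (μ * φ t) = μ * T (φ t) := by
      change T (μ * φ t) = _
      rw [map_mul, hμ]
    rw [e] at h
    exact h
  obtain ⟨u, hu⟩ := (hφu t).map T
  have hI := hasFDerivAt_ringInverse (𝕜 := ℝ) u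
  rw [hu] at hI
  have h2 := (hφ t).mul (hI.comp_hasDerivAt t hTφ)
  rw [hσ']
  refine HasDerivAt.congr_deriv h2 ?_
  simp [← hu, mul_assoc, sub_eq_add_neg]
end

section
/- Let R be an associative unital ring with a ring automorphism T : R → R. Let J, μ ∈ R with T(J) = J and T(μ) = μ, and suppose μ − J is a unit of R. Let σ_n, σ_{n+1} be units of R such that (μ − J)·σ_{n+1} = σ_n · T((μ − J)·σ_n) · (T(σ_n))⁻¹. Then σ_{n+1} = (μ − J)⁻¹ · σ_n · (μ − J). -/
/-- For the dressing chain of the generalized Zakharov–Shabat problem with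
`T(J) = J`, `T(μ) = μ` and `μ − J` a unit, the chain equation
`(μ − J)·σ_{n+1} = σ_n · T((μ − J)·σ_n) · (Tσ_n)⁻¹` forces the trivial dressing
`σ_{n+1} = (μ − J)⁻¹ · σ_n · (μ − J)`. -/
theorem zs_dressing_chain_trivial {R : Type*} [Ring R] (T : R ≃+* R)
    (J μ : R) (hJ : T J = J) (hμ : T μ = μ)
    (u : Rˣ) (hu : (u : R) = μ - J)
    (σn σn1 : Rˣ)
    (hchain : (μ - J) * (σn1 : R)
      = (σn : R) * T ((μ - J) * (σn : R)) * (((Units.map (T : R →* R) σn)⁻¹ : Rˣ) : R)) :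
    (σn1 : R) = ((u⁻¹ : Rˣ) : R) * (σn : R) * (μ - J) := by
  have hT : T (σn : R) = ((Units.map (T : R →* R) σn : Rˣ) : R) := rfl
  rw [map_mul, map_sub, hJ, hμ, hT, mul_assoc, mul_assoc, Units.mul_inv, mul_one, ← hu] at hchain
  rw [← hu, mul_assoc, ← hchain, Units.inv_mul_cancel_left]
end

section
/- Let R be an associative unital ring. Let u : ℤ³ → R and let φ : ℤ³ → R take unit values, written φ_n(j,r), and satisfy φ_n(j, r−1) = φ_n(j, r) + u(n,j,r)·φ_{n−1}(j, r) for all n, j, r. Set σ(n,j,r) := φ_n(j,r)·φ_{n−1}(j,r)⁻¹ and u⁻(n,j,r) := u(n,j,r) − σ(n,j,r−1) + σ(n,j,r). Then for every ψ : ℤ³ → R satisfying ψ_n(j, r−1) = ψ_n(j, r) + u(n,j,r)·ψ_{n−1}(j, r) for all n, j, r, the Darboux transform ψ⁻_n(j,r) := ψ_n(j,r) − σ(n,j,r)·ψ_{n−1}(j,r) satisfies ψ⁻_n(j, r−1) = ψ⁻_n(j, r) + u⁻(n,j,r)·ψ⁻_{n−1}(j, r) for all n, j, r. -/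
/-- Darboux covariance of the second kind for the lattice equation
`f_n(j,r−1) = f_n(j,r) + u(n,j,r)·f_{n−1}(j,r)`: if the unit-valued `φ` is a particular
solution, `σ(n,j,r) = φ_n(j,r)·φ_{n−1}(j,r)⁻¹` and
`u⁻(n,j,r) = u(n,j,r) − σ(n,j,r−1) + σ(n,j,r)`, then for every solution `ψ` the Darboux
transform `ψ⁻_n(j,r) = ψ_n(j,r) − σ(n,j,r)·ψ_{n−1}(j,r)` solves the same equation with
potential `u⁻`. -/
theorem lattice_darboux_covariance_second_kind {R : Type*} [Ring R]
    (u : ℤ → ℤ → ℤ → R) (φ : ℤ → ℤ → ℤ → Rˣ)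
    (hφ : ∀ n j r : ℤ, (φ n j (r - 1) : R)
      = (φ n j r : R) + u n j r * (φ (n - 1) j r : R))
    (σ : ℤ → ℤ → ℤ → R)
    (hσ : ∀ n j r, σ n j r = (φ n j r : R) * (((φ (n - 1) j r)⁻¹ : Rˣ) : R))
    (um : ℤ → ℤ → ℤ → R)
    (hum : ∀ n j r, um n j r = u n j r - σ n j (r - 1) + σ n j r)
    (ψ : ℤ → ℤ → ℤ → R)
    (hψ : ∀ n j r : ℤ, ψ n j (r - 1) = ψ n j r + u n j r * ψ (n - 1) j r)
    (ψm : ℤ → ℤ → ℤ → R)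
    (hψm : ∀ n j r, ψm n j r = ψ n j r - σ n j r * ψ (n - 1) j r) :
    ∀ n j r : ℤ, ψm n j (r - 1) = ψm n j r + um n j r * ψm (n - 1) j r := by
  intro n j r
  have hs : ∀ n r, σ n j r * (φ (n - 1) j r : R) = φ n j r := by
    intro n r
    rw [hσ, mul_assoc, Units.inv_mul, mul_one]
  have key : σ n j (r - 1) * (u (n - 1) j r + σ (n - 1) j r)
      = (u n j r + σ n j r) * σ (n - 1) j r := by
    apply (φ (n - 1 - 1) j r).isUnit.mul_right_cancel
    rw [mul_assoc, mul_assoc, add_mul, hs (n - 1) r, add_comm, ← hφ (n - 1) j r,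
      hs n (r - 1), hφ n j r, add_mul, hs n r, add_comm]
  have key2 : σ n j (r - 1) * u (n - 1) j r
      = (u n j r - σ n j (r - 1) + σ n j r) * σ (n - 1) j r := by
    rw [mul_add] at key
    rw [eq_sub_of_add_eq key]
    noncomm_ring
  rw [hψm, hψm, hψm, hψ, hψ (n - 1), hum, mul_add, ← mul_assoc, key2]
  noncomm_ring
end

section
/- Let R be an associative unital ring. Let u : ℤ³ → R and let φ : ℤ³ → R take unit values, written φ_n(j,r), and satisfy φ_n(j, r−1) = φ_n(j, r) + u(n,j,r)·φ_{n−1}(j, r) for all n, j, r. Set σ(n,j,r) := φ_n(j,r)·φ_{n−1}(j,r)⁻¹. Then for all n, j, r: u(n,j,r)·σ(n−1,j,r) − σ(n,j,r−1)·u(n−1,j,r) = ( σ(n,j,r−1) − σ(n,j,r) )·σ(n−1,j,r). -/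
/-- For the lattice equation `f_n(j,r−1) = f_n(j,r) + u(n,j,r)·f_{n−1}(j,r)`
with a unit-valued particular solution `φ` and dressing factor
`σ(n,j,r) = φ_n(j,r)·φ_{n−1}(j,r)⁻¹`, the generalized Miura-type relation
`u(n,j,r)·σ(n−1,j,r) − σ(n,j,r−1)·u(n−1,j,r) = (σ(n,j,r−1) − σ(n,j,r))·σ(n−1,j,r)` holds. -/
theorem lattice_miura_relation {R : Type*} [Ring R]
    (u : ℤ → ℤ → ℤ → R) (φ : ℤ → ℤ → ℤ → Rˣ)
    (hφ : ∀ n j r : ℤ, (φ n j (r - 1) : R)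
      = (φ n j r : R) + u n j r * (φ (n - 1) j r : R))
    (σ : ℤ → ℤ → ℤ → R)
    (hσ : ∀ n j r, σ n j r = (φ n j r : R) * (((φ (n - 1) j r)⁻¹ : Rˣ) : R)) :
    ∀ n j r : ℤ,
      u n j r * σ (n - 1) j r - σ n j (r - 1) * u (n - 1) j r
        = (σ n j (r - 1) - σ n j r) * σ (n - 1) j r := by
  intro n j r
  have h1 := hφ n j r
  have h2 := hφ (n - 1) j r
  have e1 : σ n j (r - 1) * (φ (n - 1) j (r - 1) : R) = φ n j (r - 1) := by
    rw [hσ, Units.inv_mul_cancel_right]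
  have e2 : σ n j r * (φ (n - 1) j r : R) = φ n j r := by
    rw [hσ, Units.inv_mul_cancel_right]
  have e3 : σ (n - 1) j r * (φ (n - 1 - 1) j r : R) = φ (n - 1) j r := by
    rw [hσ, Units.inv_mul_cancel_right]
  apply (φ (n - 1 - 1) j r).isUnit.mul_right_cancel
  simp only [sub_mul, mul_assoc, e3, e2]
  rw [h2, mul_add, h1] at e1
  rw [sub_eq_sub_iff_add_eq_add, add_comm, ← e1, add_comm]
end

section
/- Let R be an associative unital ring. Let u : ℤ³ → R and let φ : ℤ³ → R take unit values, written φ_n(j,r), and satisfy φ_n(j, r−1) = φ_n(j, r) + u(n,j,r)·φ_{n−1}(j, r) for all n, j, r. Set σ(n,j,r) := φ_n(j,r)·φ_{n−1}(j,r)⁻¹ and u⁻(n,j,r) := u(n,j,r) − σ(n,j,r−1) + σ(n,j,r). Then for all n, j, r: u⁻(n,j,r)·σ(n−1,j,r) = σ(n,j,r−1)·u(n−1,j,r). -/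
/-- For the lattice equation `f_n(j,r−1) = f_n(j,r) + u(n,j,r)·f_{n−1}(j,r)`
with a unit-valued particular solution `φ`, dressing factor
`σ(n,j,r) = φ_n(j,r)·φ_{n−1}(j,r)⁻¹` and transformed potential
`u⁻(n,j,r) = u(n,j,r) − σ(n,j,r−1) + σ(n,j,r)`, the second covariance condition
`u⁻(n,j,r)·σ(n−1,j,r) = σ(n,j,r−1)·u(n−1,j,r)` holds. -/
theorem lattice_darboux_second_covariance_condition {R : Type*} [Ring R]
    (u : ℤ → ℤ → ℤ → R) (φ : ℤ → ℤ → ℤ → Rˣ)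
    (hφ : ∀ n j r : ℤ, (φ n j (r - 1) : R)
      = (φ n j r : R) + u n j r * (φ (n - 1) j r : R))
    (σ : ℤ → ℤ → ℤ → R)
    (hσ : ∀ n j r, σ n j r = (φ n j r : R) * (((φ (n - 1) j r)⁻¹ : Rˣ) : R))
    (um : ℤ → ℤ → ℤ → R)
    (hum : ∀ n j r, um n j r = u n j r - σ n j (r - 1) + σ n j r) :
    ∀ n j r : ℤ, um n j r * σ (n - 1) j r = σ n j (r - 1) * u (n - 1) j r := by
  intro n j r
  have h1 := hφ n j r
  have h2 := hφ (n - 1) j r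
  rw [hum, hσ, hσ, hσ]
  generalize φ n j r = a at *
  generalize φ (n - 1) j r = b at *
  generalize φ (n - 1 - 1) j r = c at *
  generalize φ n j (r - 1) = A at *
  generalize φ (n - 1) j (r - 1) = B at *
  have hu : u n j r = ((A : R) - a) * ((b⁻¹ : Rˣ) : R) := by
    rw [h1, add_sub_cancel_left, Units.mul_inv_cancel_right]
  have hv : u (n - 1) j r = ((B : R) - b) * ((c⁻¹ : Rˣ) : R) := by
    rw [h2, add_sub_cancel_left, Units.mul_inv_cancel_right]
  rw [hu, hv]
  simp only [sub_mul, add_mul, mul_sub, mul_assoc, Units.inv_mul_cancel_left]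
  abel
end

section
/- Let A be a unital Banach algebra with a continuous algebra automorphism T : A → A. Fix integers M, N ≥ 0 and functions U_m : ℝ → A for −M ≤ m ≤ N. Let φ : ℝ → A be differentiable with φ(t) a unit for every t, satisfying φ'(t) = Σ_{m=−M}^{N} U_m(t)·T^m(φ(t)) for all t. Set σ⁻(t) := φ(t)·(T⁻¹(φ(t)))⁻¹, and define B⁻_m(t) ∈ A for all m ∈ ℤ by B⁻_{−1}(t) = 1 and B⁻_m(t) = T^m(σ⁻(t))·B⁻_{m−1}(t) for every m ∈ ℤ (for m < −1 this reads B⁻_{m−1}(t) = (T^m(σ⁻(t)))⁻¹·B⁻_m(t)). Then σ⁻ is differentiable and for all t: σ⁻'(t) = Σ_{m=−M}^{N} [ U_m(t)·B⁻_m(t) − σ⁻(t)·T⁻¹(U_m(t))·B⁻_{m−1}(t) ]. -/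
/-- In a unital Banach algebra with continuous automorphism `T`, if a
unit-valued differentiable `φ` solves `φ' = Σ_{m=-M}^{N} U_m · T^m φ`, then the
second-kind dressing factor `σ⁻ = φ·(T⁻¹φ)⁻¹` is differentiable with
`σ⁻' = Σ_{m=-M}^{N} [U_m · B⁻_m − σ⁻ · T⁻¹(U_m) · B⁻_{m−1}]`, where the second-type
lattice Bell polynomials `B⁻_m`, `m ∈ ℤ`, satisfy `B⁻_{−1} = 1` and
`B⁻_m = T^m(σ⁻)·B⁻_{m−1}`. -/
theorem dressing_factor_evolution_second_kind
    {A : Type*} [NormedRing A] [NormedAlgebra ℝ A] [CompleteSpace A]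
    (T : A ≃+* A) (hT : Continuous T) (M N : ℕ) (U : ℤ → ℝ → A)
    (φ : ℝ → A) (hφu : ∀ t, IsUnit (φ t))
    (hφ : ∀ t, HasDerivAt φ
      (∑ m ∈ Finset.Icc (-(M : ℤ)) (N : ℤ), U m t * (T ^ m) (φ t)) t)
    (σm : ℝ → A) (hσm : ∀ t, σm t = φ t * Ring.inverse (T.symm (φ t)))
    (B : ℤ → ℝ → A) (hBinit : ∀ t, B (-1) t = 1)
    (hBrec : ∀ (m : ℤ) (t : ℝ), B m t = (T ^ m) (σm t) * B (m - 1) t) :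
    ∀ t, HasDerivAt σm
      (∑ m ∈ Finset.Icc (-(M : ℤ)) (N : ℤ),
        (U m t * B m t - σm t * T.symm (U m t) * B (m - 1) t)) t := by
  have hmul : ∀ (m : ℤ) (x : A), (T ^ m) (T.symm x) = (T ^ (m - 1)) x := by
    intro m x
    rw [zpow_sub_one]; rfl
  have hmul2 : ∀ (m : ℤ) (x : A), T.symm ((T ^ m) x) = (T ^ (m - 1)) x := by
    intro m x
    have : m - 1 = -1 + m := by ring
    rw [this, zpow_add, zpow_neg_one]; rfl
  have hψu : ∀ t, IsUnit (T.symm (φ t)) := fun t => (hφu t).map T.symm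
  have hσu : ∀ t, IsUnit (σm t) := fun t => by
    rw [hσm]; exact (hφu t).mul (hψu t).ringInverse
  have hσψ : ∀ t, σm t * T.symm (φ t) = φ t := fun t => by
    rw [hσm, mul_assoc, Ring.inverse_mul_cancel _ (hψu t), mul_one]
  have key : ∀ (m : ℤ) t, (T ^ m) (σm t) * (T ^ (m - 1)) (φ t) = (T ^ m) (φ t) := by
    intro m t
    rw [← hmul, ← map_mul, hσψ]
  have hB : ∀ (m : ℤ) t, B m t * T.symm (φ t) = (T ^ m) (φ t) := by
    intro m t
    induction m using Int.inductionOn' (b := -1) with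
    | zero => rw [hBinit, one_mul, zpow_neg_one]; rfl
    | succ k _ ih =>
      rw [hBrec, add_sub_cancel_right, mul_assoc, ih]
      simpa using key (k + 1) t
    | pred k _ ih =>
      have hu : IsUnit ((T ^ k) (σm t)) := (hσu t).map (T ^ k)
      apply hu.mul_left_cancel
      rw [← mul_assoc, ← hBrec, ih, key]
  have hB' : ∀ (m : ℤ) t, B m t = (T ^ m) (φ t) * Ring.inverse (T.symm (φ t)) := by
    intro m t
    rw [← hB, mul_assoc, Ring.mul_inverse_cancel _ (hψu t), mul_one]
  let L : A →L[ℝ] A := (T : A →+ A).toRealLinearMap hT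
  have hL : ∀ x, L x = T x := fun x => rfl
  let E : A ≃L[ℝ] A := ContinuousLinearEquiv.ofBijective L
    (LinearMap.ker_eq_bot.2 T.injective) (LinearMap.range_eq_top.2 T.surjective)
  have hE : ∀ x, E.symm x = T.symm x := by
    intro x
    rw [ContinuousLinearEquiv.symm_apply_eq]
    exact (T.apply_symm_apply x).symm
  intro t
  have h1 : HasDerivAt (fun s => T.symm (φ s)) (T.symm
      (∑ m ∈ Finset.Icc (-(M : ℤ)) (N : ℤ), U m t * (T ^ m) (φ t))) t := by
    have := (E.symm : A →L[ℝ] A).hasFDerivAt.comp_hasDerivAt t (hφ t)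
    simpa only [ContinuousLinearEquiv.coe_coe, hE, Function.comp_def] using this
  obtain ⟨u, hu⟩ := hψu t
  have h2 := hasFDerivAt_ringInverse (𝕜 := ℝ) u
  rw [hu] at h2
  have h3 := (hφ t).mul (h2.comp_hasDerivAt t h1)
  have hf : σm = φ * (Ring.inverse ∘ fun s => T.symm (φ s)) := funext hσm
  rw [hf]
  convert h3 using 1
  have hi : Ring.inverse (T.symm (φ t)) = ↑u⁻¹ := by rw [← hu, Ring.inverse_unit]
  simp only [← hf, Finset.sum_add_distrib, hB', hσm, hi, Function.comp_apply, map_sum, map_mul,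
    hmul2, neg_apply, ContinuousLinearMap.mulLeftRight_apply, Finset.sum_mul,
    Finset.mul_sum, mul_assoc, mul_neg, sub_eq_add_neg]
end

section
/- Let A be a unital Banach algebra with a continuous algebra automorphism T : A → A, and let u, v, w : ℝ → A. Let φ : ℝ → A be differentiable with φ(t) a unit for every t, satisfying φ'(t) = u(t)·T(φ(t)) + v(t)·φ(t) + w(t)·T⁻¹(φ(t)) for all t. Set σ(t) := T(φ(t))·φ(t)⁻¹ and F(t) := u(t)·σ(t) + v(t) + w(t)·(T⁻¹(σ(t)))⁻¹. Then σ is differentiable and σ'(t) = T(F(t))·σ(t) − σ(t)·F(t) for all t. -/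
/-- In a unital Banach algebra with continuous automorphism `T`, if a
unit-valued differentiable `φ` satisfies `φ' = u·Tφ + v·φ + w·T⁻¹φ`, then
`σ = (Tφ)·φ⁻¹` is differentiable and satisfies `σ' = T(F)·σ − σ·F`, where
`F = u·σ + v + w·(T⁻¹σ)⁻¹`. -/
theorem nahm_sigma_evolution
    {A : Type*} [NormedRing A] [NormedAlgebra ℝ A] [CompleteSpace A]
    (T : A ≃+* A) (hT : Continuous T) (u v w : ℝ → A)
    (φ : ℝ → A) (hφu : ∀ t, IsUnit (φ t))
    (hφ : ∀ t, HasDerivAt φ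
      (u t * T (φ t) + v t * φ t + w t * T.symm (φ t)) t)
    (σ : ℝ → A) (hσ : ∀ t, σ t = T (φ t) * Ring.inverse (φ t))
    (F : ℝ → A)
    (hF : ∀ t, F t = u t * σ t + v t + w t * Ring.inverse (T.symm (σ t))) :
    ∀ t, HasDerivAt σ (T (F t) * σ t - σ t * F t) t := by
  intro t
  obtain ⟨p, hp⟩ := hφu t
  have hinv : Ring.inverse (φ t) = ((p⁻¹ : Aˣ) : A) := by rw [← hp, Ring.inverse_unit]
  let q : Aˣ := Units.map (T.symm : A →* A) p
  have hq : (q : A) = T.symm (φ t) := by rw [← hp]; rfl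
  have hqi : ((q⁻¹ : Aˣ) : A) = T.symm ((p⁻¹ : Aˣ) : A) := rfl
  have hσi : Ring.inverse (T.symm (σ t)) = T.symm (φ t) * ((p⁻¹ : Aˣ) : A) := by
    have h1 : T.symm (σ t) = ((p * q⁻¹ : Aˣ) : A) := by
      rw [hσ, hinv, map_mul, T.symm_apply_apply, Units.val_mul, hqi, hp]
    rw [h1, Ring.inverse_unit, mul_inv_rev, inv_inv, Units.val_mul, hq]
  have hFφ : u t * T (φ t) + v t * φ t + w t * T.symm (φ t) = F t * φ t := by
    rw [hF, hσi, hσ, hinv, ← hp]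
    simp only [add_mul, mul_assoc, Units.inv_mul, mul_one]
  have hd := hφ t
  rw [hFφ] at hd
  let L : A →L[ℝ] A := AddMonoidHom.toRealLinearMap (T : A →+ A) hT
  have hTd : HasDerivAt (fun s => T (φ s)) (T (F t * φ t)) t :=
    L.hasFDerivAt.comp_hasDerivAt t hd
  have hI := hasFDerivAt_ringInverse (𝕜 := ℝ) p
  rw [hp] at hI
  have hId := hI.comp_hasDerivAt t hd
  have hm := hTd.mul hId
  have hfun : σ = (fun s => T (φ s)) * (Ring.inverse ∘ φ) := funext hσ
  rw [← hfun] at hm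
  convert hm using 1
  simp only [Function.comp, ContinuousLinearMap.neg_apply,
    ContinuousLinearMap.mulLeftRight_apply, hσ, hinv, map_mul]
  rw [← hp]
  simp only [mul_assoc, Units.mul_inv, mul_one, mul_neg, sub_eq_add_neg]
end

section
/- Let A be a unital Banach algebra with a continuous algebra automorphism T : A → A, and let u, v, w : ℝ → A. Let φ : ℝ → A be differentiable, unit-valued, and satisfy φ' = u·Tφ + v·φ + w·T⁻¹φ; set σ := (Tφ)·φ⁻¹. Let g : ℝ → A be differentiable and unit-valued. Define the transformed potentials u[1] := g·T(u)·(T(g))⁻¹, v[1] := g·T(v)·g⁻¹ − g·σ·u·g⁻¹ + g·T(u)·T(σ)·g⁻¹ + g'·g⁻¹, and w[1] := g·σ·w·(T⁻¹(g·σ))⁻¹. Then for every differentiable ψ : ℝ → A satisfying ψ' = u·Tψ + v·ψ + w·T⁻¹ψ, the function ψ[1] := g·(Tψ − σ·ψ) satisfies ψ[1]' = u[1]·T(ψ[1]) + v[1]·ψ[1] + w[1]·T⁻¹(ψ[1]). -/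
/-- Covariance of the three-term lattice equation
`ψ' = u·Tψ + v·ψ + w·T⁻¹ψ` under the combined Darboux–gauge transformation
`ψ[1] = g·(Tψ − σ·ψ)`, with `σ = (Tφ)·φ⁻¹` built from a unit-valued solution `φ` and
`g` differentiable unit-valued, and transformed potentials
`u[1] = g·T(u)·(Tg)⁻¹`, `v[1] = g·T(v)·g⁻¹ − g·σ·u·g⁻¹ + g·T(u)·T(σ)·g⁻¹ + g'·g⁻¹`,
`w[1] = g·σ·w·(T⁻¹(g·σ))⁻¹`. -/
theorem nahm_darboux_gauge_covariance
    {A : Type*} [NormedRing A] [NormedAlgebra ℝ A] [CompleteSpace A]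
    (T : A ≃+* A) (hT : Continuous T) (u v w : ℝ → A)
    (φ : ℝ → A) (hφu : ∀ t, IsUnit (φ t))
    (hφ : ∀ t, HasDerivAt φ
      (u t * T (φ t) + v t * φ t + w t * T.symm (φ t)) t)
    (σ : ℝ → A) (hσ : ∀ t, σ t = T (φ t) * Ring.inverse (φ t))
    (g g' : ℝ → A) (hgu : ∀ t, IsUnit (g t)) (hg : ∀ t, HasDerivAt g (g' t) t)
    (u1 v1 w1 : ℝ → A)
    (hu1 : ∀ t, u1 t = g t * T (u t) * Ring.inverse (T (g t)))
    (hv1 : ∀ t, v1 t = g t * T (v t) * Ring.inverse (g t)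
      - g t * σ t * u t * Ring.inverse (g t)
      + g t * T (u t) * T (σ t) * Ring.inverse (g t)
      + g' t * Ring.inverse (g t))
    (hw1 : ∀ t, w1 t = g t * σ t * w t * Ring.inverse (T.symm (g t * σ t)))
    (ψ : ℝ → A)
    (hψ : ∀ t, HasDerivAt ψ
      (u t * T (ψ t) + v t * ψ t + w t * T.symm (ψ t)) t)
    (ψ1 : ℝ → A) (hψ1 : ∀ t, ψ1 t = g t * (T (ψ t) - σ t * ψ t)) :
    ∀ t, HasDerivAt ψ1
      (u1 t * T (ψ1 t) + v1 t * ψ1 t + w1 t * T.symm (ψ1 t)) t := by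
  intro t
  have hTd : ∀ (f : ℝ → A) (f' : A), HasDerivAt f f' t →
      HasDerivAt (fun s => T (f s)) (T f') t := by
    intro f f' hf
    let L : A →L[ℝ] A := AddMonoidHom.toRealLinearMap (T : A →+ A) hT
    exact (L.hasFDerivAt (x := f t)).comp_hasDerivAt t hf
  have hinv : ∀ x y : A, x * y = 1 → y * x = 1 → Ring.inverse x = y := by
    intro x y h1 h2
    exact Ring.inverse_unit (⟨x, y, h1, h2⟩ : Aˣ)
  obtain ⟨P, hP⟩ := hφu t
  obtain ⟨G, hG⟩ := hgu t
  have hq : Ring.inverse (φ t) = ↑P⁻¹ := by rw [← hP]; exact Ring.inverse_unit P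
  have hh : Ring.inverse (g t) = ↑G⁻¹ := by rw [← hG]; exact Ring.inverse_unit G
  have pq : φ t * ↑P⁻¹ = 1 := by rw [← hP]; exact P.mul_inv
  have qp : ↑P⁻¹ * φ t = 1 := by rw [← hP]; exact P.inv_mul
  have gh : g t * ↑G⁻¹ = 1 := by rw [← hG]; exact G.mul_inv
  have hg1 : ↑G⁻¹ * g t = 1 := by rw [← hG]; exact G.inv_mul
  have dinv : HasDerivAt (fun s => Ring.inverse (φ s))
      (-(↑P⁻¹ * (u t * T (φ t) + v t * φ t + w t * T.symm (φ t)) * ↑P⁻¹)) t := by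
    have h := hasFDerivAt_ringInverse (𝕜 := ℝ) P
    rw [hP] at h
    have h2 := h.comp_hasDerivAt t (hφ t)
    refine HasDerivAt.congr_deriv h2 ?_
    simp
  have e1 : ψ1 = fun s => g s * (T (ψ s) - T (φ s) * Ring.inverse (φ s) * ψ s) := by
    funext s; rw [hψ1, hσ]
  have D := (hg t).mul ((hTd ψ _ (hψ t)).sub (((hTd φ _ (hφ t)).mul dinv).mul (hψ t)))
  rw [show (g * ((fun s => T (ψ s)) - ((fun s => T (φ s)) * fun s => Ring.inverse (φ s)) * ψ))
    = ψ1 from e1.symm] at D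
  refine D.congr_deriv ?_
  clear D dinv
  generalize hqd : ((P⁻¹ : Aˣ) : A) = q at *
  generalize hhd : ((G⁻¹ : Aˣ) : A) = h at *
  have cT : ∀ a b : A, a * b = 1 → T a * T b = 1 := by
    intro a b h; rw [← map_mul, h, map_one]
  have cS : ∀ a b : A, a * b = 1 → T.symm a * T.symm b = 1 := by
    intro a b h; rw [← map_mul, h, map_one]
  have c : ∀ a b : A, a * b = 1 → ∀ x, a * (b * x) = x := by
    intro a b h x; rw [← mul_assoc, h, one_mul]
  have i1 : Ring.inverse (T (g t)) = T h := hinv _ _ (cT _ _ gh) (cT _ _ hg1)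
  have i2 : Ring.inverse (T.symm (g t * (T (φ t) * q)))
      = T.symm (φ t) * (q * T.symm h) := by
    apply hinv
    · simp only [map_mul, RingEquiv.symm_apply_apply, mul_assoc,
        c _ _ (cS _ _ qp), c _ _ pq, cS _ _ gh]
    · simp only [map_mul, RingEquiv.symm_apply_apply, mul_assoc,
        c _ _ (cS _ _ hg1), c _ _ qp, cS _ _ pq]
  rw [hu1, hv1, hw1, hψ1, hσ, hq, hh, i1, i2]
  simp only [Pi.sub_apply, Pi.mul_apply, hq, map_mul, map_add, map_sub,
    RingEquiv.symm_apply_apply, RingEquiv.apply_symm_apply, mul_add, add_mul, mul_sub, sub_mul,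
    mul_assoc, mul_neg, neg_mul, c _ _ (cS _ _ hg1), c _ _ (cT _ _ hg1), c _ _ hg1,
    c _ _ qp, c _ _ pq, c _ _ (cT _ _ qp), c _ _ (cT _ _ pq), c _ _ (cS _ _ qp),
    c _ _ (cS _ _ pq)]
  abel
end

section
/- Let R be an associative unital ring with a ring automorphism T : R → R, let u, v, w ∈ R, and let λ, μ ∈ R be central elements with T(λ) = λ and T(μ) = μ. Let φ be a unit of R satisfying u·T(φ) + v·φ + w·T⁻¹(φ) = μ·φ, set σ := T(φ)·φ⁻¹, and let g be a unit of R. Define u[1] := g·T(u)·(T(g))⁻¹, v[1] := g·( T(v) − σ·u + T(u)·T(σ) )·g⁻¹, and w[1] := g·σ·w·(T⁻¹(g·σ))⁻¹. Then for every ψ ∈ R satisfying u·T(ψ) + v·ψ + w·T⁻¹(ψ) = λ·ψ, the element ψ[1] := g·(T(ψ) − σ·ψ) satisfies u[1]·T(ψ[1]) + v[1]·ψ[1] + w[1]·T⁻¹(ψ[1]) = λ·ψ[1]. -/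
/-- Darboux–gauge covariance of the Nahm spectral problem: with central
`λ, μ` fixed by `T`, an eigenfunction unit `φ` (`u·Tφ + v·φ + w·T⁻¹φ = μ·φ`), dressing
factor `σ = (Tφ)·φ⁻¹`, a unit `g`, and transformed potentials
`u[1] = g·T(u)·(Tg)⁻¹`, `v[1] = g·(T(v) − σ·u + T(u)·T(σ))·g⁻¹`,
`w[1] = g·σ·w·(T⁻¹(g·σ))⁻¹`, every solution `ψ` of `u·Tψ + v·ψ + w·T⁻¹ψ = λ·ψ` yields a
solution `ψ[1] = g·(Tψ − σ·ψ)` of the transformed spectral problem with the same `λ`. -/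
theorem nahm_spectral_darboux_gauge_covariance {R : Type*} [Ring R] (T : R ≃+* R)
    (u v w lam μ : R)
    (hlamc : ∀ x : R, lam * x = x * lam) (hμc : ∀ x : R, μ * x = x * μ)
    (hlamT : T lam = lam) (hμT : T μ = μ)
    (φ : Rˣ)
    (hφ : u * T (φ : R) + v * (φ : R) + w * T.symm (φ : R) = μ * (φ : R))
    (σ : Rˣ) (hσ : σ = Units.map (T : R →* R) φ * φ⁻¹)
    (g : Rˣ) (u1 v1 w1 : R)
    (hu1 : u1 = (g : R) * T u * (((Units.map (T : R →* R) g)⁻¹ : Rˣ) : R))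
    (hv1 : v1 = (g : R) * (T v - (σ : R) * u + T u * T (σ : R)) * ((g⁻¹ : Rˣ) : R))
    (hw1 : w1 = (g : R) * (σ : R) * w
      * (((Units.map (T.symm : R →* R) (g * σ))⁻¹ : Rˣ) : R))
    (ψ : R) (hψ : u * T ψ + v * ψ + w * T.symm ψ = lam * ψ)
    (ψ1 : R) (hψ1 : ψ1 = (g : R) * (T ψ - (σ : R) * ψ)) :
    u1 * T ψ1 + v1 * ψ1 + w1 * T.symm ψ1 = lam * ψ1 := by
  have hs : (σ : R) * (φ : R) = T (φ : R) := by
    rw [hσ]; simp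
  obtain ⟨t, ht⟩ : ∃ t : Rˣ, t = (Units.map (T.symm : R →* R) σ)⁻¹ := ⟨_, rfl⟩
  have htc : (t : R) * T.symm (σ : R) = 1 := by
    have h := (Units.map (T.symm : R →* R) σ).inv_mul
    rw [ht]; simpa using h
  have htφ : (t : R) * (φ : R) = T.symm (φ : R) := by
    have h := congrArg T.symm hs
    rw [map_mul, RingEquiv.symm_apply_apply] at h
    calc (t : R) * (φ : R) = (t : R) * (T.symm (σ : R) * T.symm (φ : R)) := by rw [h]
      _ = T.symm (φ : R) := by rw [← mul_assoc, htc, one_mul]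
  have ric : u * (σ : R) + v + w * (t : R) = μ := by
    have h : (u * (σ : R) + v + w * (t : R)) * (φ : R) = μ * (φ : R) := by
      rw [add_mul, add_mul, mul_assoc, mul_assoc, hs, htφ, hφ]
    exact (Units.mul_left_inj φ).1 h
  have hTt : T (t : R) * (σ : R) = 1 := by
    have h := congrArg T htc
    simpa using h
  have ric2 : T u * T (σ : R) * (σ : R) + T v * (σ : R) + T w = μ * (σ : R) := by
    have h := congrArg (fun x => T x * (σ : R)) ric
    simp only [map_add, map_mul, add_mul, hμT] at h
    rwa [mul_assoc (T w), hTt, mul_one] at h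
  have hψT : T u * T (T ψ) + T v * T ψ + T w * ψ = lam * T ψ := by
    have h := congrArg T hψ
    simpa [hlamT] using h
  have e1 : u1 * T ψ1 = (g : R) * (T u * (T (T ψ) - T (σ : R) * T ψ)) := by
    have h : (((Units.map (T : R →* R) g)⁻¹ : Rˣ) : R) * T (g : R) = 1 :=
      (Units.map (T : R →* R) g).inv_mul
    rw [hu1, hψ1, map_mul, map_sub, map_mul, mul_assoc, ← mul_assoc _ (T (g : R)), h, one_mul,
      mul_assoc]
  have e2 : v1 * ψ1 = (g : R) * ((T v - (σ : R) * u + T u * T (σ : R)) * (T ψ - (σ : R) * ψ)) := by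
    rw [hv1, hψ1, mul_assoc, Units.inv_mul_cancel_left, mul_assoc]
  have e3 : w1 * T.symm ψ1 = (g : R) * ((σ : R) * w * ((t : R) * ψ - T.symm ψ)) := by
    have h : (((Units.map (T.symm : R →* R) g)⁻¹ : Rˣ) : R) * T.symm (g : R) = 1 :=
      (Units.map (T.symm : R →* R) g).inv_mul
    rw [hw1, hψ1, map_mul, mul_inv_rev, ← ht, Units.val_mul, map_mul, map_sub, map_mul,
      RingEquiv.symm_apply_apply]
    rw [mul_assoc _ _ (T.symm (g : R) * _), mul_assoc (t : R), ← mul_assoc _ (T.symm (g : R)), h,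
      one_mul, mul_sub (t : R), ← mul_assoc (t : R), htc, one_mul]
    simp only [mul_assoc]
  have e4 : lam * ψ1 = (g : R) * (lam * T ψ - (σ : R) * (lam * ψ)) := by
    rw [hψ1, ← mul_assoc, hlamc, mul_assoc, mul_sub lam, ← mul_assoc lam (σ : R), hlamc (σ : R),
      mul_assoc (σ : R)]
  rw [e1, e2, e3, e4, ← mul_add, ← mul_add]
  congr 1
  have r1 := congrArg (fun x => (σ : R) * x * ψ) ric
  have r2 := congrArg (fun x => x * ψ) ric2
  simp only [hμc (σ : R)] at r1 r2
  rw [← hψT, ← hψ]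
  have r3 := r1.trans r2.symm
  rw [← sub_eq_zero] at r3 ⊢
  rw [← r3]
  noncomm_ring
end

section
/- Let A be a unital Banach algebra with a continuous algebra automorphism T : A → A, and let p, q : ℝ → A. Let φ : ℝ → A be differentiable with φ(t) a unit for every t, satisfying φ'(t) = q(t)·φ(t) + p(t)·T(φ(t)) for all t. Then σ(t) := T(φ(t))·φ(t)⁻¹ is differentiable and σ'(t) = T(q(t))·σ(t) + T(p(t))·T(σ(t))·σ(t) − σ(t)·q(t) − σ(t)·p(t)·σ(t) for all t. -/
/-- In a unital Banach algebra with continuous automorphism `T`, if a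
unit-valued differentiable `φ` satisfies the Nahm evolution equation
`φ' = q·φ + p·Tφ`, then `σ = (Tφ)·φ⁻¹` is differentiable with the Riccati-type evolution
`σ' = T(q)·σ + T(p)·T(σ)·σ − σ·q − σ·p·σ`. -/
theorem nahm_evolution_sigma_riccati
    {A : Type*} [NormedRing A] [NormedAlgebra ℝ A] [CompleteSpace A]
    (T : A ≃+* A) (hT : Continuous T) (p q : ℝ → A)
    (φ : ℝ → A) (hφu : ∀ t, IsUnit (φ t))
    (hφ : ∀ t, HasDerivAt φ (q t * φ t + p t * T (φ t)) t)
    (σ : ℝ → A) (hσ : ∀ t, σ t = T (φ t) * Ring.inverse (φ t)) :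
    ∀ t, HasDerivAt σ
      (T (q t) * σ t + T (p t) * T (σ t) * σ t - σ t * q t - σ t * p t * σ t) t := by
  intro t
  obtain ⟨u, hu⟩ := hφu t
  have h1 : HasDerivAt (fun s => T (φ s)) (T (q t * φ t + p t * T (φ t))) t :=
    ((T : A →+* A).toAddMonoidHom.toRealLinearMap hT).hasFDerivAt.comp_hasDerivAt t (hφ t)
  have h0 := hasFDerivAt_ringInverse (𝕜 := ℝ) u
  rw [hu] at h0
  have h2 := h0.comp_hasDerivAt t (hφ t)
  have h3 := h1.mul h2
  have hfun : σ = (fun s => T (φ s)) * (Ring.inverse ∘ φ) := by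
    funext s
    simp [hσ]
  have hσt : σ t = T (u : A) * (↑u⁻¹ : A) := by rw [hσ, ← hu, Ring.inverse_unit]
  have hc : T (↑u⁻¹ : A) * T (u : A) = 1 := by rw [← map_mul]; simp
  rw [hfun]
  convert! h3 using 1
  rw [← hfun, hσt]
  have e : T (p t) * T (T (u : A) * (↑u⁻¹ : A)) * (T (u : A) * (↑u⁻¹ : A))
      = T (p t) * T (T (u : A)) * (↑u⁻¹ : A) := by
    calc _ = T (p t) * T (T (u : A)) * (T (↑u⁻¹ : A) * T (u : A)) * (↑u⁻¹ : A) := by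
          rw [map_mul]; simp only [mul_assoc]
      _ = _ := by rw [hc, mul_one]
  rw [e]
  simp [← hu, mul_add, add_mul, mul_assoc]
  abel
end
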